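/- Let Φ ∈ ℝ^{m×n} have restricted isometry constant δ_K < 1 of order K, let x ∈ ℝ^n be K-sparse with support T, |T| = K, and let y = Φx + v. Suppose that after k iterations (1 ≤ k < K) a run of OMP has selected only correct indices, i.e., T^k ⊆ T with |T^k| = k. Then u := max_{i ∈ T\T^k} |⟨φ_i, r^k⟩| satisfies u ≥ (1/√(K−k)) · ((1 − δ_K)‖x_{T\T^k}‖₂ − √(1 + δ_K)·‖v‖₂), where x_{T\T^k} denotes the restriction of x to the indices in T\T^k. -/

import Mathlib

noncomputable section
open Finset

/-- `Vec n` is `ℝ^n` with the Euclidean (ℓ²) norm. -/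
abbrev Vec (n : ℕ) := EuclideanSpace ℝ (Fin n)

/-- The standard inner product `⟨u, v⟩ = ∑ i, u i * v i`. -/
def dot {n : ℕ} (u v : Vec n) : ℝ := ∑ i, u i * v i

/-- The `j`-th column of a matrix, as a Euclidean vector. -/
def col {m n : ℕ} (Φ : Matrix (Fin m) (Fin n) ℝ) (j : Fin n) : Vec m :=
  WithLp.toLp 2 fun i => Φ i j

/-- Matrix-vector multiplication `Φ x`, valued in Euclidean space. -/
def mulVec' {m n : ℕ} (Φ : Matrix (Fin m) (Fin n) ℝ) (x : Vec n) : Vec m :=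
  WithLp.toLp 2 fun i => ∑ j, Φ i j * x j

/-- The support of a vector, as a `Finset`. -/
def suppF {n : ℕ} (x : Vec n) : Finset (Fin n) :=
  Finset.univ.filter fun i => x i ≠ 0

/-- Restriction of a vector to an index set (zero outside the set). -/
def restrict {n : ℕ} (x : Vec n) (S : Finset (Fin n)) : Vec n :=
  WithLp.toLp 2 fun i => if i ∈ S then x i else 0

/-- `RIPConst Φ L δ` : δ is the restricted isometry constant of `Φ` of order `L`,
i.e. the smallest `c ≥ 0` such that `(1-c)‖u‖² ≤ ‖Φu‖² ≤ (1+c)‖u‖²` for all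
`L`-sparse `u`. -/
def RIPConst {m n : ℕ} (Φ : Matrix (Fin m) (Fin n) ℝ) (L : ℕ) (δ : ℝ) : Prop :=
  IsLeast {c : ℝ | 0 ≤ c ∧ ∀ u : Vec n, (suppF u).card ≤ L →
    (1 - c) * ‖u‖ ^ 2 ≤ ‖mulVec' Φ u‖ ^ 2 ∧ ‖mulVec' Φ u‖ ^ 2 ≤ (1 + c) * ‖u‖ ^ 2} δ

/-- Signal-to-noise ratio `‖Φx‖²/‖v‖²`. -/
def SNR {m n : ℕ} (Φ : Matrix (Fin m) (Fin n) ℝ) (x : Vec n) (v : Vec m) : ℝ :=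
  ‖mulVec' Φ x‖ ^ 2 / ‖v‖ ^ 2

/-- A run of `N` iterations of Orthogonal Matching Pursuit on data `(Φ, y)`:
`idx (k+1) = t^{k+1}` is the index selected at iteration `k+1`, `sets k = T^k`,
`est k = x^k` and `res k = r^k`. -/
structure OMPRun {m n : ℕ} (Φ : Matrix (Fin m) (Fin n) ℝ) (y : Vec m) (N : ℕ) where
  idx : ℕ → Fin n
  sets : ℕ → Finset (Fin n)
  est : ℕ → Vec n
  res : ℕ → Vec m
  sets_zero : sets 0 = ∅
  est_zero : est 0 = 0
  res_zero : res 0 = y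
  idx_not_mem : ∀ k < N, idx (k + 1) ∉ sets k
  idx_max : ∀ k < N, ∀ i : Fin n, i ∉ sets k →
    |dot (col Φ i) (res k)| ≤ |dot (col Φ (idx (k + 1))) (res k)|
  sets_succ : ∀ k < N, sets (k + 1) = insert (idx (k + 1)) (sets k)
  est_supp : ∀ k < N, suppF (est (k + 1)) ⊆ sets (k + 1)
  est_min : ∀ k < N, ∀ u : Vec n, suppF u ⊆ sets (k + 1) →
    ‖y - mulVec' Φ (est (k + 1))‖ ≤ ‖y - mulVec' Φ u‖
  res_succ : ∀ k < N, res (k + 1) = y - mulVec' Φ (est (k + 1))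

/-- The vector `Φᵀ w` restricted to an index set `A` (the vector of correlations
`⟨φ_i, w⟩` for `i ∈ A`, zero outside `A`), as a Euclidean vector. -/
def colDots {m n : ℕ} (Φ : Matrix (Fin m) (Fin n) ℝ) (A : Finset (Fin n)) (w : Vec m) : Vec n :=
  WithLp.toLp 2 fun i => if i ∈ A then dot (col Φ i) w else 0

/-- The vector `Φᵀ w` of all column correlations, as a plain function (so `‖·‖`
is the sup/ℓ∞ norm). -/
def dualVec {m n : ℕ} (Φ : Matrix (Fin m) (Fin n) ℝ) (w : Vec m) : Fin n → ℝ :=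
  fun i => dot (col Φ i) w

/-- `P⊥_S w` : the projection of `w` onto the orthogonal complement of the span
of the columns of `Φ` indexed by `S`. -/
def perpProj {m n : ℕ} (Φ : Matrix (Fin m) (Fin n) ℝ) (S : Finset (Fin n)) (w : Vec m) : Vec m :=
  w - (Submodule.orthogonalProjectionOnto (Submodule.span ℝ (col Φ '' (S : Set (Fin n)))) w : Vec m)

/-- The `j`-th largest value (1-indexed) among `{|x i| : i ∈ Γ}` (with
multiplicities); `0` if `j > |Γ|` or `j = 0`. -/
def kthLargest {n : ℕ} (x : Vec n) (Γ : Finset (Fin n)) (j : ℕ) : ℝ :=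
  if 1 ≤ j ∧ j ≤ Γ.card then
    (Multiset.sort (Γ.val.map fun i => |x i|) (· ≤ ·)).getD (Γ.card - j) 0
  else 0

/-!
Let `z = x - x^k` be the estimation error, so that `r^k = Φ z + v`. As `r^k` is orthogonal to the
columns indexed by `T^k`, and `z` agrees with `x` off `T^k`, the number `⟨Φ z, r^k⟩` is
`⟨Φ x_A, r^k⟩` with `A = T \ T^k`. By Cauchy-Schwarz it is at most `‖x_A‖ √|A| u`, while the
restricted isometry bounds make it at least `‖z‖ ((1 - δ) ‖z‖ - √(1 + δ) ‖v‖)`. As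
`‖x_A‖ ≤ ‖z‖`, the claim follows on dividing by `‖x_A‖`, unless its right-hand side is nonpositive
and there is nothing to prove.
-/

lemma mul_sub_le_of_mul_mul_sub_le {a b c s t : ℝ} (hs : 0 ≤ s) (hst : s ≤ t) (hb : 0 ≤ b)
    (hc : 0 ≤ c) (h : t * (a * t - b) ≤ s * c) : a * s - b ≤ c := by
  by_contra! hlt
  have has : 0 < a * s := by linarith
  have hspos : 0 < s := hs.lt_of_ne' (right_ne_zero_of_mul has.ne')
  have hapos : 0 < a := pos_of_mul_pos_left has hs
  have ht : 0 ≤ t := hs.trans hst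
  have hle : s * (a * s - b) ≤ s * c := calc
    s * (a * s - b) ≤ t * (a * t - b) := by gcongr; linarith
    _ ≤ s * c := h
  exact hlt.not_ge (le_of_mul_le_mul_left hle hspos)

section InnerProductSpace

variable {E : Type*} [NormedAddCommGroup E] [InnerProductSpace ℝ E]

lemma mul_sub_le_inner_add_of_norm_sq_bounds {α β s : ℝ} {p : E} (v : E) (hs : 0 ≤ s)
    (hα : α * s ^ 2 ≤ ‖p‖ ^ 2) (hβ : ‖p‖ ^ 2 ≤ β * s ^ 2) :
    s * (α * s - √β * ‖v‖) ≤ inner ℝ p (p + v) := by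
  have hp : ‖p‖ ≤ √β * s := calc
    ‖p‖ ≤ √(β * s ^ 2) := Real.le_sqrt_of_sq_le hβ
    _ = √β * s := by rw [Real.sqrt_mul' _ (sq_nonneg s), Real.sqrt_sq hs]
  calc s * (α * s - √β * ‖v‖) = α * s ^ 2 - √β * s * ‖v‖ := by ring
    _ ≤ ‖p‖ ^ 2 - ‖p‖ * ‖v‖ := by gcongr
    _ ≤ ‖p‖ ^ 2 + inner ℝ p v := by
      linarith [neg_le_of_abs_le (abs_real_inner_le_norm p v)]
    _ = inner ℝ p (p + v) := by rw [inner_add_right, real_inner_self_eq_norm_sq]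

end InnerProductSpace

section Restrict

variable {n : ℕ} {S T : Finset (Fin n)}

lemma suppF_subset_iff {u : Vec n} : suppF u ⊆ S ↔ ∀ i ∉ S, u i = 0 := by
  simp only [suppF, subset_iff, mem_filter_univ, not_imp_comm]

/-- The coordinate subspace of the vectors supported in `S`. -/
def supportedVecs (S : Finset (Fin n)) : Submodule ℝ (Vec n) where
  carrier := {u | suppF u ⊆ S}
  zero_mem' := suppF_subset_iff.mpr fun _ _ => rfl
  add_mem' hu hw := suppF_subset_iff.mpr fun i hi => by
    simp [suppF_subset_iff.mp hu i hi, suppF_subset_iff.mp hw i hi]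
  smul_mem' c u hu := suppF_subset_iff.mpr fun i hi => by
    simp [suppF_subset_iff.mp hu i hi]

lemma suppF_sub_subset {u w : Vec n} (hu : suppF u ⊆ S) (hw : suppF w ⊆ S) :
    suppF (u - w) ⊆ S :=
  (supportedVecs S).sub_mem hu hw

lemma norm_restrict_sq (u : Vec n) (S : Finset (Fin n)) :
    ‖restrict u S‖ ^ 2 = ∑ i ∈ S, u i ^ 2 := by
  simp [EuclideanSpace.real_norm_sq_eq, _root_.restrict, ite_pow]

lemma norm_restrict_le (u : Vec n) (S : Finset (Fin n)) : ‖restrict u S‖ ≤ ‖u‖ := by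
  refine (sq_le_sq₀ (norm_nonneg _) (norm_nonneg _)).mp ?_
  rw [norm_restrict_sq, EuclideanSpace.real_norm_sq_eq]
  exact sum_le_univ_sum_of_nonneg fun i => sq_nonneg (u i)

lemma restrict_sub_eq_left {x e : Vec n} (he : suppF e ⊆ S) (T : Finset (Fin n)) :
    restrict (x - e) (T \ S) = restrict x (T \ S) := by
  ext i
  simp only [_root_.restrict, mem_sdiff]
  split_ifs with hi
  · simp [suppF_subset_iff.mp he i hi.2]
  · rfl

lemma suppF_sub_restrict_sdiff_subset {x : Vec n} (hx : suppF x ⊆ T) (S : Finset (Fin n)) :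
    suppF (x - restrict x (T \ S)) ⊆ S := by
  refine suppF_subset_iff.mpr fun i hi => ?_
  by_cases hiT : i ∈ T
  · simp [_root_.restrict, hiT, hi]
  · simp [_root_.restrict, hiT, suppF_subset_iff.mp hx i hiT]

lemma inner_restrict_left (u w : Vec n) (S : Finset (Fin n)) :
    inner ℝ (restrict u S) w = inner ℝ (restrict u S) (restrict w S) := by
  simp [PiLp.inner_apply, _root_.restrict]

lemma exists_norm_restrict_le_sqrt_card_mul (w : Vec n) (hS : S.Nonempty) :
    ∃ i ∈ S, ‖restrict w S‖ ≤ √(S.card) * |w i| := by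
  obtain ⟨i, hi, hmax⟩ := S.exists_max_image (fun j => |w j|) hS
  refine ⟨i, hi, (sq_le_sq₀ (norm_nonneg _) (by positivity)).mp ?_⟩
  calc ‖restrict w S‖ ^ 2 = ∑ j ∈ S, w j ^ 2 := norm_restrict_sq w S
    _ ≤ S.card • w i ^ 2 := sum_le_card_nsmul _ _ _ fun j hj => sq_le_sq.mpr (hmax j hj)
    _ = (√(S.card) * |w i|) ^ 2 := by simp [mul_pow]

lemma exists_inner_restrict_le (u w : Vec n) (hS : S.Nonempty) :
    ∃ i ∈ S, inner ℝ (restrict u S) w ≤ ‖restrict u S‖ * (√(S.card) * |w i|) := by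
  obtain ⟨i, hi, hle⟩ := exists_norm_restrict_le_sqrt_card_mul w hS
  refine ⟨i, hi, ?_⟩
  calc inner ℝ (restrict u S) w = inner ℝ (restrict u S) (restrict w S) :=
        inner_restrict_left u w S
    _ ≤ ‖restrict u S‖ * ‖restrict w S‖ := real_inner_le_norm _ _
    _ ≤ ‖restrict u S‖ * (√(S.card) * |w i|) := by gcongr

end Restrict

section LeastSquares

variable {m n : ℕ} {Φ : Matrix (Fin m) (Fin n) ℝ} {S T : Finset (Fin n)}

lemma mulVec'_eq_toEuclideanLin (Φ : Matrix (Fin m) (Fin n) ℝ) (u : Vec n) :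
    mulVec' Φ u = Matrix.toEuclideanLin Φ u := rfl

lemma mulVec'_sub (Φ : Matrix (Fin m) (Fin n) ℝ) (u w : Vec n) :
    mulVec' Φ (u - w) = mulVec' Φ u - mulVec' Φ w := by
  simp only [mulVec'_eq_toEuclideanLin, map_sub]

lemma inner_mulVec'_left (Φ : Matrix (Fin m) (Fin n) ℝ) (u : Vec n) (w : Vec m) :
    inner ℝ (mulVec' Φ u) w = inner ℝ u (WithLp.toLp 2 (dualVec Φ w)) := by
  simp only [PiLp.inner_apply, mulVec', dualVec, dot, col, RCLike.inner_apply, conj_trivial,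
    mul_sum, sum_mul]
  rw [sum_comm]
  exact sum_congr rfl fun _ _ => sum_congr rfl fun _ _ => by ring

/-- `e` is a least-squares fit of `y` by the columns of `Φ` indexed by `S`: it is supported in `S`
and minimizes `‖y - Φ u‖` among such vectors. Fits need not be unique. -/
def IsLeastSquaresOn (Φ : Matrix (Fin m) (Fin n) ℝ) (y : Vec m) (S : Finset (Fin n))
    (e : Vec n) : Prop :=
  suppF e ⊆ S ∧ IsMinOn (fun u => ‖y - mulVec' Φ u‖) {u | suppF u ⊆ S} e

namespace IsLeastSquaresOn

variable {y : Vec m} {e : Vec n}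

lemma inner_mulVec'_residual_eq_zero (he : IsLeastSquaresOn Φ y S e) {u : Vec n}
    (hu : suppF u ⊆ S) : inner ℝ (mulVec' Φ u) (y - mulVec' Φ e) = 0 := by
  let V := (supportedVecs S).map (Matrix.toEuclideanLin Φ)
  have hmem {w : Vec n} (hw : suppF w ⊆ S) : mulVec' Φ w ∈ V := Submodule.mem_map_of_mem hw
  have hmin : ‖y - mulVec' Φ e‖ = ⨅ p : V, ‖y - p‖ := by
    refine le_antisymm (le_ciInf ?_) (ciInf_le ⟨0, ?_⟩ (⟨_, hmem he.1⟩ : V))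
    · rintro ⟨_, w, hw, rfl⟩
      exact he.2 hw
    · rintro _ ⟨p, rfl⟩
      exact norm_nonneg _
  rw [real_inner_comm]
  exact (V.norm_eq_iInf_iff_real_inner_eq_zero (hmem he.1)).mp hmin _ (hmem hu)

lemma inner_mulVec'_error_residual (he : IsLeastSquaresOn Φ y S e) {x : Vec n}
    (hx : suppF x ⊆ T) :
    inner ℝ (mulVec' Φ (x - e)) (y - mulVec' Φ e) =
      inner ℝ (mulVec' Φ (restrict x (T \ S))) (y - mulVec' Φ e) := by
  have hsupp : suppF (x - e - restrict x (T \ S)) ⊆ S := by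
    rw [sub_right_comm]
    exact suppF_sub_subset (suppF_sub_restrict_sdiff_subset hx S) he.1
  rw [← sub_eq_zero, ← inner_sub_left, ← mulVec'_sub]
  exact he.inner_mulVec'_residual_eq_zero hsupp

end IsLeastSquaresOn

end LeastSquares

section RestrictedIsometry

variable {m n : ℕ} {Φ : Matrix (Fin m) (Fin n) ℝ}

/-- Restricted isometry bounds on a single support `U`, with independent lower and upper
constants `α` and `β` for the squared norm. -/
def HasIsometryBoundsOn (Φ : Matrix (Fin m) (Fin n) ℝ) (U : Finset (Fin n)) (α β : ℝ) : Prop :=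
  ∀ u : Vec n, suppF u ⊆ U →
    α * ‖u‖ ^ 2 ≤ ‖mulVec' Φ u‖ ^ 2 ∧ ‖mulVec' Φ u‖ ^ 2 ≤ β * ‖u‖ ^ 2

lemma RIPConst.hasIsometryBoundsOn {L : ℕ} {δ : ℝ} (hΦ : RIPConst Φ L δ) {U : Finset (Fin n)}
    (hU : U.card ≤ L) : HasIsometryBoundsOn Φ U (1 - δ) (1 + δ) :=
  fun u hu => hΦ.1.2 u ((card_le_card hu).trans hU)

end RestrictedIsometry

namespace OMPRun

variable {m n N k : ℕ} {Φ : Matrix (Fin m) (Fin n) ℝ} {y : Vec m}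

lemma res_eq (run : OMPRun Φ y N) (hk : k ≤ N) : run.res k = y - mulVec' Φ (run.est k) := by
  cases k with
  | zero => simp [run.res_zero, run.est_zero, mulVec'_eq_toEuclideanLin]
  | succ j => exact run.res_succ j hk

lemma isLeastSquaresOn_est (run : OMPRun Φ y N) (hk : k ≤ N) :
    IsLeastSquaresOn Φ y (run.sets k) (run.est k) := by
  cases k with
  | zero =>
    rw [run.sets_zero, run.est_zero]
    refine ⟨suppF_subset_iff.mpr fun _ _ => rfl, fun u hu => ?_⟩
    have hu0 : u = 0 := by
      ext i
      exact suppF_subset_iff.mp hu i (notMem_empty i)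
    simp [hu0]
  | succ j => exact ⟨run.est_supp j hk, run.est_min j hk⟩

end OMPRun

theorem stmt5_general {m n : ℕ} {Φ : Matrix (Fin m) (Fin n) ℝ} {α β : ℝ} {S T : Finset (Fin n)}
    {x e : Vec n} {v : Vec m} (he : IsLeastSquaresOn Φ (mulVec' Φ x + v) S e)
    (hx : suppF x ⊆ T) (hΦ : HasIsometryBoundsOn Φ (S ∪ T) α β) (hTS : (T \ S).Nonempty) :
    ∃ i ∈ T \ S, (1 / √((T \ S).card)) * (α * ‖restrict x (T \ S)‖ - √β * ‖v‖) ≤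
      |dot (col Φ i) (mulVec' Φ x + v - mulVec' Φ e)| := by
  set r := mulVec' Φ x + v - mulVec' Φ e with hr
  have hr_error : r = mulVec' Φ (x - e) + v := by rw [hr, mulVec'_sub]; abel
  obtain ⟨i, hi, hupper⟩ := exists_inner_restrict_le x (WithLp.toLp 2 (dualVec Φ r)) hTS
  refine ⟨i, hi, ?_⟩
  have hcard : 0 < √((T \ S).card : ℝ) := by simpa using hTS.card_pos
  obtain ⟨hα, hβ⟩ := hΦ (x - e)
    (suppF_sub_subset (hx.trans subset_union_right) (he.1.trans subset_union_left))
  have hnorm : ‖restrict x (T \ S)‖ ≤ ‖x - e‖ :=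
    restrict_sub_eq_left he.1 T ▸ norm_restrict_le (x - e) (T \ S)
  rw [one_div, inv_mul_le_iff₀ hcard]
  refine mul_sub_le_of_mul_mul_sub_le (norm_nonneg _) hnorm (by positivity) (by positivity) ?_
  calc ‖x - e‖ * (α * ‖x - e‖ - √β * ‖v‖) ≤ inner ℝ (mulVec' Φ (x - e)) r :=
        hr_error ▸ mul_sub_le_inner_add_of_norm_sq_bounds v (norm_nonneg _) hα hβ
    _ = inner ℝ (mulVec' Φ (restrict x (T \ S))) r := he.inner_mulVec'_error_residual hx
    _ = inner ℝ (restrict x (T \ S)) (WithLp.toLp 2 (dualVec Φ r)) := inner_mulVec'_left Φ _ r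
    _ ≤ _ := hupper

/-- lower bound on `u = max_{i ∈ T\T^k} |⟨φ_i, r^k⟩|` when the
first `k` iterations of OMP selected only correct indices. -/
theorem stmt5 {m n K k : ℕ} (Φ : Matrix (Fin m) (Fin n) ℝ) (δ : ℝ)
    (x : Vec n) (v y : Vec m) (T : Finset (Fin n))
    (hsupp : suppF x = T) (hcard : T.card = K)
    (hRIP : RIPConst Φ K δ) (hδ : δ < 1)
    (hy : y = mulVec' Φ x + v)
    (hk1 : 1 ≤ k) (hkK : k < K)
    (run : OMPRun Φ y k)
    (hsub : run.sets k ⊆ T) (hcardk : (run.sets k).card = k) :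
    ∃ i ∈ T \ run.sets k,
      (1 / Real.sqrt ((K : ℝ) - k)) *
          ((1 - δ) * ‖restrict x (T \ run.sets k)‖ - Real.sqrt (1 + δ) * ‖v‖)
        ≤ |dot (col Φ i) (run.res k)| := by
  have hcard_sdiff : ((T \ run.sets k).card : ℝ) = K - k := by
    rw [cast_card_sdiff hsub, hcard, hcardk]
  subst hy
  rw [← hcard_sdiff, run.res_eq le_rfl]
  exact stmt5_general (run.isLeastSquaresOn_est le_rfl) hsupp.subset
    (hRIP.hasIsometryBoundsOn (by rw [union_eq_right.mpr hsub, hcard]))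
    (sdiff_nonempty_of_card_lt_card (by omega))

end
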